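/- Let L be a full-rank even lattice in ℝ^m (a free ℤ-submodule of rank m spanning ℝ^m with ⟨x,x⟩ ∈ 2ℤ for all x ∈ L), let N be the order of the finite group L^*/L, and let {α_ℓ}_{ℓ=1}^N ⊆ L^* be a complete set of coset representatives. Define the N×N complex matrices T and S by T_{ℓℓ'} := e^{πi(⟨α_ℓ,α_ℓ⟩ − m/12)} δ_{ℓℓ'} and S_{ℓℓ'} := N^{−1/2} e^{−2πi⟨α_ℓ,α_{ℓ'}⟩}. Then (S·T)³ = S² as N×N matrices. -/

import Mathlib

open Finset Complex

noncomputable section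

/-- The dual lattice `L^* = {x : ⟨x,y⟩ ∈ ℤ for all y ∈ L}` of a lattice `L ⊆ ℝ^d`. -/
def dualLat {d : ℕ} (L : Submodule ℤ (Fin d → ℝ)) : Submodule ℤ (Fin d → ℝ) where
  carrier := {x | ∀ y ∈ L, ∃ k : ℤ, ∑ i, x i * y i = (k : ℝ)}
  add_mem' := by
    intro a b ha hb y hy
    obtain ⟨k1, h1⟩ := ha y hy
    obtain ⟨k2, h2⟩ := hb y hy
    refine ⟨k1 + k2, ?_⟩
    push_cast
    rw [← h1, ← h2, ← Finset.sum_add_distrib]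
    exact Finset.sum_congr rfl fun i _ => by simp [add_mul]
  zero_mem' := fun y hy => ⟨0, by simp⟩
  smul_mem' := by
    intro c a ha y hy
    obtain ⟨k, h⟩ := ha y hy
    refine ⟨c * k, ?_⟩
    push_cast
    rw [← h, Finset.mul_sum]
    exact Finset.sum_congr rfl fun i _ => by simp [zsmul_eq_mul]; ring

/-!
For a quadratic form `Q` on a finite abelian group, completing the square gives the matrix identity
`T * S * T * S * T = G • S`, where `S` and `T` are the unnormalised matrices and
`G = ∑ e^{2πi Q(x)}` is the Gauss sum of `Q`. For the discriminant form of an even lattice, the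
theorem thus amounts to Milgram's formula `G = √N e^{πim/4}`.

The modulus of `G` comes from the nondegeneracy of the discriminant form, that is, from `L** = L`.
Passing to the orthogonal complement of an isotropic subgroup changes a Gauss sum by a positive
factor only, so the phase of `G` may be computed on a sublattice of `L` with an orthogonal basis.
There `G` is a product of sums `∑ e^{πi r²/n}` over `r` modulo an even `n`, and these are read off
from the behaviour of the Jacobi theta function `θ(τ)` under `τ ↦ -1/τ` as `τ → 1/n`.
-/

section ThetaAsymptotics

open Filter Topology

lemma cpow_half_ofReal_mul_neg_I_mul {t : ℝ} (ht : 0 < t) {z : ℂ} (hz : 0 < z.re) :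
    (t * (-I * z)) ^ (1 / 2 : ℂ) = √t * cexp (-(Real.pi * I / 4)) * z ^ (1 / 2 : ℂ) := by
  have hz0 : z ≠ 0 := by rintro rfl; simp at hz
  have harg := abs_lt.1 (abs_arg_lt_pi_div_two_iff.2 (.inl hz))
  have hlog : log (-I * z) = log (-I) + log z := by
    refine (log_mul_eq_add_log_iff (by simp) hz0).2 ⟨?_, ?_⟩ <;> rw [arg_neg_I] <;>
      linarith [Real.pi_pos]
  have hsqrt : (√t : ℂ) = cexp (Real.log t * (1 / 2)) := by
    rw [Real.sqrt_eq_rpow, Real.rpow_def_of_pos ht]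
    push_cast
    rfl
  rw [cpow_def_of_ne_zero (by simp [ht.ne', hz0]), cpow_def_of_ne_zero hz0,
    log_ofReal_mul ht (by simp [hz0]), hlog, log_neg_I, hsqrt, ← Complex.exp_add, ← Complex.exp_add]
  ring_nf

lemma jacobiTheta_functional_equation (τ : ℂ) :
    jacobiTheta τ = 1 / (-I * τ) ^ (1 / 2 : ℂ) * jacobiTheta (-1 / τ) := by
  simpa [jacobiTheta_eq_jacobiTheta₂] using jacobiTheta₂_functional_equation 0 τ

lemma jacobiTheta_add_of_even {n : ℕ} (hn : Even n) (τ : ℂ) :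
    jacobiTheta (τ + n) = jacobiTheta τ := by
  have hper : Function.Periodic jacobiTheta 2 := fun z ↦ by rw [add_comm, jacobiTheta_two_add]
  obtain ⟨a, rfl⟩ := hn
  rw [← hper.nat_mul a τ]
  push_cast
  ring_nf

variable {n : ℕ} [NeZero n]

lemma jacobiTheta_one_div_add_I_div (hn : Even n) {t : ℝ} (ht : 0 < t) :
    jacobiTheta (1 / n + I / (n ^ 2 * t)) =
      cexp (Real.pi * I / 4) * √(n * t) * jacobiTheta (-1 / n + t * I) := by
  have hn0 : (n : ℂ) ≠ 0 := NeZero.ne _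
  have ht0 : (t : ℂ) ≠ 0 := mod_cast ht.ne'
  have hnt : 0 < n * t := mul_pos (by simp [NeZero.pos n]) ht
  set τ : ℂ := 1 / n + I / (n ^ 2 * t) with hτ
  set σ : ℂ := -1 / n + t * I with hσ
  have hre : 0 < (-I * σ).re := by
    rw [hσ, show (-1 / n : ℂ) = (-1 / n : ℝ) by push_cast; rfl]
    simpa [-ofReal_div] using ht
  have hσ0 : σ ≠ 0 := by rintro h; simp [h] at hre
  have hτσ : n * t * I * τ = σ := by
    rw [hτ, hσ]
    field_simp
    linear_combination I_sq
  have hτ0 : τ ≠ 0 := by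
    rintro h
    simp [h, hσ0.symm] at hτσ
  have hinv : -1 / σ = -1 / τ + n := by
    have hnσ : n * σ = n * t * I - 1 := by rw [hσ]; field_simp; ring
    field_simp
    linear_combination -hτσ - τ * hnσ
  have hmul : -I * τ = (1 / (n * t) : ℝ) * (-I * (-I * σ)) := by
    rw [← hτσ]
    push_cast
    field_simp
    linear_combination -I_sq
  rw [jacobiTheta_functional_equation τ, jacobiTheta_functional_equation σ, hinv,
    jacobiTheta_add_of_even hn, hmul, cpow_half_ofReal_mul_neg_I_mul (by positivity) hre,
    Complex.exp_neg, one_div (n * t : ℝ), Real.sqrt_inv]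
  push_cast
  field_simp

lemma cexp_mul_int_add_sq_of_even (hn : Even n) (k : ℤ) (r : ℕ) (z : ℂ) :
    cexp (Real.pi * I * (k * n + r) ^ 2 * (1 / n + z)) =
      cexp (Real.pi * I * r ^ 2 / n) * cexp (Real.pi * I * (k * n + r) ^ 2 * z) := by
  have hn0 : (n : ℂ) ≠ 0 := NeZero.ne _
  obtain ⟨a, ha⟩ := hn
  rw [← Complex.exp_add, Complex.exp_eq_exp_iff_exists_int]
  refine ⟨a * k ^ 2 + k * r, ?_⟩
  have ha : (n : ℂ) = a + a := mod_cast ha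
  push_cast
  field_simp
  rw [ha]
  ring

lemma jacobiTheta_one_div_add_I_div_eq_sum_cosKernel (hn : Even n) {t : ℝ} (ht : 0 < t) :
    jacobiTheta (1 / n + I / (n ^ 2 * t)) =
      √t * ∑ r : Fin n, cexp (Real.pi * I * (r : ℂ) ^ 2 / n) *
        HurwitzZeta.cosKernel ((r / n : ℝ) : UnitAddCircle) t := by
  have hn0 : (n : ℂ) ≠ 0 := NeZero.ne _
  have ht0 : (t : ℂ) ≠ 0 := mod_cast ht.ne'
  have hfiber (r : Fin n) : HasSum (fun k : ℤ ↦ cexp (Real.pi * I * (k * n + r) ^ 2 *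
      (1 / n + I / (n ^ 2 * t)))) (cexp (Real.pi * I * (r : ℂ) ^ 2 / n) *
        HurwitzZeta.evenKernel ((r / n : ℝ) : UnitAddCircle) (1 / t)) := by
    refine ((hasSum_ofReal.2 <|
      HurwitzZeta.hasSum_int_evenKernel (r / n : ℝ) (one_div_pos.2 ht)).mul_left _).congr_fun ?_
    intro k
    rw [cexp_mul_int_add_sq_of_even hn k r]
    congr 1
    push_cast
    congr 1
    field_simp
    linear_combination (k * n + r) ^ 2 * I_sq
  have him : 0 < (1 / n + I / (n ^ 2 * t) : ℂ).im := by
    rw [show (1 / n + I / (n ^ 2 * t) : ℂ) = (1 / n : ℝ) + (1 / (n ^ 2 * t) : ℝ) * I by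
      push_cast; ring, add_im, ofReal_im, im_ofReal_mul, I_im]
    have := NeZero.pos n
    positivity
  have hsum := hasSum_jacobiTheta₂_term 0 him
  rw [← jacobiTheta_eq_jacobiTheta₂, ← (Int.divModEquiv n).symm.hasSum_iff,
    ← (Equiv.prodComm (Fin n) ℤ).hasSum_iff] at hsum
  have heq := (hsum.prod_fiberwise fun r ↦ (hfiber r).congr_fun fun k ↦ by
    simp [jacobiTheta₂_term]).unique (hasSum_fintype _)
  rw [heq, mul_sum]
  refine sum_congr rfl fun r _ ↦ ?_
  rw [HurwitzZeta.evenKernel_functional_equation, one_div_one_div, one_div t,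
    Real.inv_rpow ht.le, one_div, inv_inv, ← Real.sqrt_eq_rpow]
  push_cast
  ring

lemma tendsto_cosKernel_atTop (a : UnitAddCircle) :
    Tendsto (HurwitzZeta.cosKernel a) atTop (𝓝 1) := by
  obtain ⟨p, hp, hO⟩ := HurwitzZeta.isBigO_atTop_cosKernel_sub a
  have hexp : Tendsto (fun t : ℝ ↦ Real.exp (-p * t)) atTop (𝓝 0) :=
    Real.tendsto_exp_atBot.comp (tendsto_id.const_mul_atTop_of_neg (neg_neg_of_pos hp))
  exact tendsto_sub_nhds_zero_iff.1 (hO.trans_tendsto hexp)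

lemma tendsto_jacobiTheta_comap_im_atTop :
    Tendsto jacobiTheta (comap im atTop) (𝓝 1) := by
  have hexp : Tendsto (fun τ : ℂ ↦ Real.exp (-Real.pi * τ.im)) (comap im atTop) (𝓝 0) :=
    Real.tendsto_exp_atBot.comp
      (tendsto_comap.const_mul_atTop_of_neg (neg_neg_of_pos Real.pi_pos))
  exact tendsto_sub_nhds_zero_iff.1 (isBigO_at_im_infty_jacobiTheta_sub_one.trans_tendsto hexp)

theorem sum_cexp_pi_mul_sq_div_of_even (hn : Even n) :
    ∑ r : Fin n, cexp (Real.pi * I * (r : ℂ) ^ 2 / n) = √n * cexp (Real.pi * I / 4) := by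
  have hcos : Tendsto (fun t ↦ ∑ r : Fin n, cexp (Real.pi * I * (r : ℂ) ^ 2 / n) *
      HurwitzZeta.cosKernel ((r / n : ℝ) : UnitAddCircle) t) atTop
      (𝓝 (∑ r : Fin n, cexp (Real.pi * I * (r : ℂ) ^ 2 / n))) := by
    simpa using tendsto_finsetSum univ fun (r : Fin n) _ ↦
      (((continuous_ofReal.tendsto 1).comp (tendsto_cosKernel_atTop (r / n : ℝ))).const_mul
        (cexp (Real.pi * I * (r : ℂ) ^ 2 / n)))
  have htheta : Tendsto (fun t : ℝ ↦ √n * cexp (Real.pi * I / 4) * jacobiTheta (-1 / n + t * I))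
      atTop (𝓝 (√n * cexp (Real.pi * I / 4))) := by
    have him : Tendsto (fun t : ℝ ↦ (-1 / n + t * I : ℂ)) atTop (comap im atTop) := by
      refine tendsto_comap_iff.2 (tendsto_id.congr fun t ↦ ?_)
      rw [show (-1 / n : ℂ) = (-1 / n : ℝ) by push_cast; rfl]
      simp [-ofReal_div]
    simpa using (tendsto_jacobiTheta_comap_im_atTop.comp him).const_mul
      (√n * cexp (Real.pi * I / 4) : ℂ)
  refine tendsto_nhds_unique (hcos.congr' ?_) htheta
  filter_upwards [eventually_gt_atTop 0] with t ht
  have heq := (jacobiTheta_one_div_add_I_div_eq_sum_cosKernel hn ht).symm.trans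
    (jacobiTheta_one_div_add_I_div hn ht)
  have ht0 : (√t : ℂ) ≠ 0 := mod_cast (Real.sqrt_pos.2 ht).ne'
  rw [Real.sqrt_mul (Nat.cast_nonneg n)] at heq
  refine mul_left_cancel₀ ht0 (heq.trans ?_)
  push_cast
  ring

end ThetaAsymptotics

section QuadraticGaussSum

/-- The additive character `x ↦ e^{2πix}` of `ℝ/ℤ`, with values in `ℂ`. -/
def circleChar : AddChar UnitAddCircle ℂ :=
  Circle.coeHom.compAddChar AddCircle.toCircle_addChar

lemma circleChar_coe (x : ℝ) : circleChar (x : UnitAddCircle) = cexp (2 * Real.pi * I * x) := by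
  change ((AddCircle.toCircle (x : UnitAddCircle) : Circle) : ℂ) = _
  rw [AddCircle.toCircle_apply_mk, Circle.coe_exp]
  push_cast
  ring_nf

lemma norm_circleChar (x : UnitAddCircle) : ‖circleChar x‖ = 1 := Circle.norm_coe _

lemma circleChar_eq_one_iff {x : UnitAddCircle} : circleChar x = 1 ↔ x = 0 := by
  change ((AddCircle.toCircle x : Circle) : ℂ) = 1 ↔ x = 0
  rw [Circle.coe_eq_one, ← AddCircle.toCircle_zero,
    (AddCircle.injective_toCircle one_ne_zero).eq_iff]

lemma conj_circleChar (x : UnitAddCircle) : starRingEnd ℂ (circleChar x) = circleChar (-x) := by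
  rw [AddChar.map_neg_eq_inv, inv_eq_conj (norm_circleChar x)]

variable {A B P : Type*} [AddCommGroup A] [AddCommGroup B] [AddCommGroup P]

lemma circleChar_sum {ι : Type*} (s : Finset ι) (f : ι → UnitAddCircle) :
    circleChar (∑ i ∈ s, f i) = ∏ i ∈ s, circleChar (f i) :=
  map_prod circleChar.toMonoidHom (fun i ↦ Multiplicative.ofAdd (f i)) s

lemma sum_circleChar_comp [Fintype A] (f : A →ₗ[ℤ] UnitAddCircle) [Decidable (f = 0)] :
    ∑ x, circleChar (f x) = if f = 0 then (Fintype.card A : ℂ) else 0 := by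
  classical
  have hf : circleChar.compAddMonoidHom f.toAddMonoidHom = 0 ↔ f = 0 := by
    simp [DFunLike.ext_iff, circleChar_eq_one_iff]
  rw [← if_congr hf rfl rfl]
  exact AddChar.sum_eq_ite (circleChar.compAddMonoidHom f.toAddMonoidHom)

lemma sum_comp_eq_card_ker_mul_sum {R : Type*} [Semiring R] [Fintype A] [Fintype B] {f : A →+ B}
    (hf : Function.Surjective f) (g : B → R) : ∑ x, g (f x) = Nat.card f.ker * ∑ y, g y := by
  classical
  have hfiber (y : B) : #{x | f x = y} = Nat.card f.ker := by
    rw [AddMonoidHom.card_fiber_eq_of_mem_range f (hf y) (zero_mem f.range),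
      ← Fintype.card_subtype, ← Nat.card_eq_fintype_card]
    rfl
  rw [← Finset.sum_fiberwise' univ f g, mul_sum]
  exact sum_congr rfl fun y _ ↦ by rw [sum_const, hfiber, nsmul_eq_mul]

/-- The Gauss sum `∑ₓ e^{2πi Q(x)}` of a quadratic form `Q` on a finite abelian group with values in
`ℝ/ℤ`. It is a `finsum`, hence junk if the group is infinite. -/
def quadraticGaussSum (Q : QuadraticMap ℤ A UnitAddCircle) : ℂ := ∑ᶠ x, circleChar (Q x)

lemma quadraticGaussSum_eq_sum [Fintype A] (Q : QuadraticMap ℤ A UnitAddCircle) :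
    quadraticGaussSum Q = ∑ x, circleChar (Q x) := finsum_eq_sum_of_fintype _

lemma quadraticGaussSum_pi {ι : Type*} [Fintype ι] {M : ι → Type*} [∀ i, AddCommGroup (M i)]
    [∀ i, Finite (M i)] (Q : ∀ i, QuadraticMap ℤ (M i) UnitAddCircle) :
    quadraticGaussSum (QuadraticMap.pi Q) = ∏ i, quadraticGaussSum (Q i) := by
  classical
  have (i : ι) := Fintype.ofFinite (M i)
  simp only [quadraticGaussSum_eq_sum, QuadraticMap.pi_apply, circleChar_sum, Fintype.prod_sum]

lemma quadraticGaussSum_comp_of_surjective [Finite A] [Finite B] {f : A →ₗ[ℤ] B}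
    (hf : Function.Surjective f) (Q : QuadraticMap ℤ B UnitAddCircle) :
    quadraticGaussSum (Q.comp f) = Nat.card (LinearMap.ker f) * quadraticGaussSum Q := by
  have := Fintype.ofFinite A
  have := Fintype.ofFinite B
  simp only [quadraticGaussSum_eq_sum]
  exact sum_comp_eq_card_ker_mul_sum (f := f.toAddMonoidHom) hf fun y ↦ circleChar (Q y)

theorem norm_quadraticGaussSum [Finite A] {Q : QuadraticMap ℤ A UnitAddCircle}
    (hQ : Q.polarBilin.SeparatingLeft) : ‖quadraticGaussSum Q‖ = √(Nat.card A) := by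
  classical
  have := Fintype.ofFinite A
  have hker (z : A) : Q.polarBilin z = 0 ↔ z = 0 :=
    ⟨LinearMap.separatingLeft_iff_linear_nontrivial.1 hQ z, by rintro rfl; simp⟩
  have hsq : (normSq (quadraticGaussSum Q) : ℂ) = Nat.card A := calc
    (normSq (quadraticGaussSum Q) : ℂ)
      = ∑ x, ∑ y, circleChar (-Q x) * circleChar (Q y) := by
        simp_rw [normSq_eq_conj_mul_self, quadraticGaussSum_eq_sum, map_sum, conj_circleChar,
          sum_mul_sum]
    _ = ∑ x, ∑ z, circleChar (-Q x) * circleChar (Q (z + x)) :=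
        sum_congr rfl fun x _ ↦ (Equiv.sum_comp (Equiv.addRight x) _).symm
    _ = ∑ z, circleChar (Q z) * ∑ x, circleChar (Q.polarBilin z x) := by
        rw [sum_comm]
        refine sum_congr rfl fun z _ ↦ ?_
        rw [mul_sum]
        refine sum_congr rfl fun x _ ↦ ?_
        rw [← AddChar.map_add_eq_mul, ← AddChar.map_add_eq_mul,
          QuadraticMap.polarBilin_apply_apply, QuadraticMap.polar]
        congr 1
        abel
    _ = Nat.card A := by
        simp_rw [sum_circleChar_comp, hker]
        simp
  rw [Complex.norm_def, ofReal_injective (hsq.trans (ofReal_natCast _).symm)]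

lemma quadraticGaussSum_eq_comp_orthogonal [Finite A] {Q : QuadraticMap ℤ A UnitAddCircle}
    {H : Submodule ℤ A} (hH : ∀ x ∈ H, Q x = 0) :
    quadraticGaussSum Q = quadraticGaussSum (Q.comp (H.orthogonalBilin Q.polarBilin).subtype) := by
  classical
  have := Fintype.ofFinite A
  have hchar (x : A) : ∑ h : H, circleChar (QuadraticMap.polar Q x h) =
      if x ∈ H.orthogonalBilin Q.polarBilin then (Fintype.card H : ℂ) else 0 := by
    refine (sum_circleChar_comp ((Q.polarBilin x).comp H.subtype)).trans ?_
    refine if_congr ?_ rfl rfl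
    simp [LinearMap.ext_iff, Submodule.mem_orthogonalBilin_iff, QuadraticMap.polar_comm Q x]
  have hcard : (Fintype.card H : ℂ) ≠ 0 := mod_cast Fintype.card_ne_zero
  refine mul_left_cancel₀ hcard ?_
  calc
    (Fintype.card H : ℂ) * quadraticGaussSum Q
      = ∑ h : H, ∑ x, circleChar (Q (x + h)) := by
        rw [quadraticGaussSum_eq_sum, ← nsmul_eq_mul, ← card_univ, ← sum_const]
        exact sum_congr rfl fun h _ ↦ (Equiv.sum_comp (Equiv.addRight (h : A)) _).symm
    _ = ∑ x, circleChar (Q x) * ∑ h : H, circleChar (QuadraticMap.polar Q x h) := by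
        rw [sum_comm]
        simp_rw [mul_sum, QuadraticMap.map_add Q, hH _ (Subtype.prop _), add_zero,
          AddChar.map_add_eq_mul]
    _ = Fintype.card H * quadraticGaussSum (Q.comp (H.orthogonalBilin Q.polarBilin).subtype) := by
        simp_rw [hchar, quadraticGaussSum_eq_sum, mul_ite, mul_zero, mul_sum]
        rw [← sum_filter, sum_subtype _ (fun x ↦ mem_filter_univ x)]
        exact sum_congr rfl fun x _ ↦ mul_comm _ _

lemma exists_quadraticGaussSum_eq_mul_of_surjective [Finite A] [Finite B]
    {Q : QuadraticMap ℤ A UnitAddCircle} {Q' : QuadraticMap ℤ B UnitAddCircle}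
    {f : P →ₗ[ℤ] A} (hf : Function.Surjective f) {g : P →ₗ[ℤ] B} (hg : Function.Surjective g)
    (h : Q.comp f = Q'.comp g) :
    ∃ r : ℝ, 0 < r ∧ quadraticGaussSum Q = r * quadraticGaussSum Q' := by
  let R := LinearMap.range (f.prod g)
  let p : R →ₗ[ℤ] A := LinearMap.fst ℤ A B ∘ₗ R.subtype
  let q : R →ₗ[ℤ] B := LinearMap.snd ℤ A B ∘ₗ R.subtype
  have hp : Function.Surjective p := fun a ↦ by
    obtain ⟨x, rfl⟩ := hf a
    exact ⟨⟨(f x, g x), x, rfl⟩, rfl⟩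
  have hq : Function.Surjective q := fun b ↦ by
    obtain ⟨x, rfl⟩ := hg b
    exact ⟨⟨(f x, g x), x, rfl⟩, rfl⟩
  have hpq : Q.comp p = Q'.comp q := by
    ext ⟨_, x, rfl⟩
    exact DFunLike.congr_fun h x
  have hcard := (quadraticGaussSum_comp_of_surjective hp Q).symm.trans
    ((congrArg quadraticGaussSum hpq).trans (quadraticGaussSum_comp_of_surjective hq Q'))
  have hker : (0 : ℝ) < Nat.card (LinearMap.ker p) := mod_cast Nat.card_pos
  have hker' : (0 : ℝ) < Nat.card (LinearMap.ker q) := mod_cast Nat.card_pos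
  refine ⟨Nat.card (LinearMap.ker q) / Nat.card (LinearMap.ker p), div_pos hker' hker, ?_⟩
  have : (Nat.card (LinearMap.ker p) : ℂ) ≠ 0 := mod_cast hker.ne'
  push_cast
  rw [div_mul_eq_mul_div, eq_div_iff this, mul_comm, hcard]

theorem exists_quadraticGaussSum_eq_mul_of_isotropic [Finite A] [Finite B]
    {Q : QuadraticMap ℤ A UnitAddCircle} {Q' : QuadraticMap ℤ B UnitAddCircle}
    {f : P →ₗ[ℤ] A} (hf : Function.Surjective f) {M : Submodule ℤ P} (hM : ∀ x ∈ M, Q (f x) = 0)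
    {g : M.orthogonalBilin (Q.comp f).polarBilin →ₗ[ℤ] B} (hg : Function.Surjective g)
    (h : ∀ x, Q (f x.1) = Q' (g x)) :
    ∃ r : ℝ, 0 < r ∧ quadraticGaussSum Q = r * quadraticGaussSum Q' := by
  set H := M.map f with hH
  have hQH : ∀ x ∈ H, Q x = 0 := by rintro _ ⟨x, hx, rfl⟩; exact hM x hx
  have hmem (x : P) : f x ∈ H.orthogonalBilin Q.polarBilin ↔
      x ∈ M.orthogonalBilin (Q.comp f).polarBilin := by
    simp [Submodule.mem_orthogonalBilin_iff, hH, QuadraticMap.polar]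
  let F := f.restrict fun x hx ↦ (hmem x).2 hx
  have hF : Function.Surjective F := by
    rintro ⟨a, ha⟩
    obtain ⟨x, rfl⟩ := hf a
    exact ⟨⟨x, (hmem x).1 ha⟩, rfl⟩
  rw [quadraticGaussSum_eq_comp_orthogonal hQH]
  exact exists_quadraticGaussSum_eq_mul_of_surjective hF hg (QuadraticMap.ext h)

end QuadraticGaussSum

section WeilRepresentation

open Matrix

variable {A : Type*} [AddCommGroup A]

/-- The unnormalised matrix of the Weil representation of a finite quadratic module at
`S = [0, -1; 1, 0]`: the finite Fourier kernel of the polar form of `Q`. -/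
def weilS (Q : QuadraticMap ℤ A UnitAddCircle) : Matrix A A ℂ :=
  .of fun x y ↦ circleChar (-QuadraticMap.polar Q x y)

/-- The matrix of the Weil representation of a finite quadratic module at `T = [1, 1; 0, 1]`. -/
def weilT [DecidableEq A] (Q : QuadraticMap ℤ A UnitAddCircle) : Matrix A A ℂ :=
  .diagonal fun x ↦ circleChar (Q x)

variable [Fintype A] [DecidableEq A]

lemma weilT_mul_weilS_mul_weilT_mul_weilS_mul_weilT (Q : QuadraticMap ℤ A UnitAddCircle) :
    weilT Q * weilS Q * weilT Q * weilS Q * weilT Q = quadraticGaussSum Q • weilS Q := by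
  ext x y
  have hsquare (z : A) :
      Q x - QuadraticMap.polar Q x z + Q z - QuadraticMap.polar Q z y + Q y =
        Q (x + y - z) - QuadraticMap.polar Q x y := by
    rw [sub_eq_add_neg (x + y), QuadraticMap.map_add Q (x + y), QuadraticMap.map_add Q x y,
      QuadraticMap.map_neg, QuadraticMap.polar_neg_right, QuadraticMap.polar_add_left,
      QuadraticMap.polar_comm Q y z]
    abel
  calc
    (weilT Q * weilS Q * weilT Q * weilS Q * weilT Q) x y
      = ∑ z, circleChar
          (Q x - QuadraticMap.polar Q x z + Q z - QuadraticMap.polar Q z y + Q y) := by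
        rw [weilT, mul_diagonal, mul_apply, sum_mul]
        simp only [diagonal_mul, mul_diagonal, weilS, of_apply, sub_eq_add_neg,
          AddChar.map_add_eq_mul]
    _ = (∑ z, circleChar (Q (x + y - z))) * circleChar (-QuadraticMap.polar Q x y) := by
        simp_rw [hsquare, sub_eq_add_neg _ (QuadraticMap.polar Q x y), AddChar.map_add_eq_mul,
          sum_mul]
    _ = (quadraticGaussSum Q • weilS Q) x y := by
        rw [quadraticGaussSum_eq_sum,
          ← Equiv.sum_comp (Equiv.subLeft (x + y)) fun z ↦ circleChar (Q z)]
        rfl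

theorem smul_weilS_mul_smul_weilT_pow_three (Q : QuadraticMap ℤ A UnitAddCircle) {c d : ℂ}
    (hcd : c * d ^ 3 * quadraticGaussSum Q = 1) :
    ((c • weilS Q) * (d • weilT Q)) ^ 3 = (c • weilS Q) ^ 2 := calc
  ((c • weilS Q) * (d • weilT Q)) ^ 3
    = (c * d) ^ 3 • (weilS Q * (weilT Q * weilS Q * weilT Q * weilS Q * weilT Q)) := by
      simp only [smul_mul_smul_comm, pow_three, Matrix.mul_assoc]
  _ = (c ^ 2 * (c * d ^ 3 * quadraticGaussSum Q)) • (weilS Q * weilS Q) := by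
      rw [weilT_mul_weilS_mul_weilT_mul_weilS_mul_weilT, Matrix.mul_smul, smul_smul]
      ring_nf
  _ = (c • weilS Q) ^ 2 := by
      rw [hcd, mul_one, smul_pow, sq (weilS Q)]

end WeilRepresentation

section Cyclic

variable {n : ℕ}

lemma sq_div_two_mul_eq_of_intCast_eq (hn : Even n) {k l : ℤ} (h : (k : ZMod n) = l) :
    ((k ^ 2 / (2 * n) : ℝ) : UnitAddCircle) = ((l ^ 2 / (2 * n) : ℝ) : UnitAddCircle) := by
  rcases eq_or_ne n 0 with rfl | hn0
  · simp
  obtain ⟨a, rfl⟩ := hn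
  obtain ⟨j, hj⟩ := (ZMod.intCast_eq_intCast_iff_dvd_sub k l _).1 h
  obtain rfl : l = k + (a + a : ℕ) * j := by omega
  have ha : (a : ℝ) ≠ 0 := by rintro h; simp_all
  rw [eq_comm, ← sub_eq_zero, ← AddCircle.coe_sub, AddCircle.coe_eq_zero_iff]
  refine ⟨j * k + a * j ^ 2, ?_⟩
  push_cast [zsmul_eq_mul]
  field_simp
  ring

/-- The quadratic form `k ↦ k² / 2n` on `ℤ/n`, for `n` even: the discriminant form of the rank one
lattice with Gram matrix `(n)`. -/
def zmodQuadraticForm (hn : Even n) : QuadraticMap ℤ (ZMod n) UnitAddCircle :=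
  have hval (k : ℤ) : ((((k : ZMod n).cast : ℤ) ^ 2 / (2 * n) : ℝ) : UnitAddCircle) =
      ((k ^ 2 / (2 * n) : ℝ) : UnitAddCircle) :=
    sq_div_two_mul_eq_of_intCast_eq hn (ZMod.intCast_zmod_cast _)
  .ofPolar (fun k ↦ (((k.cast : ℤ) ^ 2 / (2 * n) : ℝ) : UnitAddCircle))
    (by
      intro a k
      obtain ⟨k, rfl⟩ := ZMod.intCast_surjective k
      rw [zsmul_eq_mul, ← Int.cast_mul, hval, hval, ← AddCircle.coe_zsmul, zsmul_eq_mul]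
      push_cast
      ring_nf)
    (by
      intro k k' l
      obtain ⟨k, rfl⟩ := ZMod.intCast_surjective k
      obtain ⟨k', rfl⟩ := ZMod.intCast_surjective k'
      obtain ⟨l, rfl⟩ := ZMod.intCast_surjective l
      simp only [QuadraticMap.polar, ← Int.cast_add, hval, ← AddCircle.coe_sub, ← AddCircle.coe_add]
      congr 1
      push_cast
      ring)
    (by
      intro a k l
      obtain ⟨k, rfl⟩ := ZMod.intCast_surjective k
      obtain ⟨l, rfl⟩ := ZMod.intCast_surjective l
      simp only [QuadraticMap.polar, zsmul_eq_mul, ← Int.cast_mul, ← Int.cast_add, hval,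
        ← AddCircle.coe_sub, ← AddCircle.coe_zsmul]
      congr 1
      push_cast
      ring)

lemma zmodQuadraticForm_intCast (hn : Even n) (k : ℤ) :
    zmodQuadraticForm hn k = ((k ^ 2 / (2 * n) : ℝ) : UnitAddCircle) :=
  sq_div_two_mul_eq_of_intCast_eq hn (ZMod.intCast_zmod_cast _)

theorem quadraticGaussSum_zmodQuadraticForm [NeZero n] (hn : Even n) :
    quadraticGaussSum (zmodQuadraticForm hn) = √n * cexp (Real.pi * I / 4) := by
  rw [← sum_cexp_pi_mul_sq_div_of_even hn, quadraticGaussSum_eq_sum,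
    ← Equiv.sum_comp (ZMod.finEquiv n).toEquiv]
  refine sum_congr rfl fun r _ ↦ ?_
  have hr : (ZMod.finEquiv n).toEquiv r = ((r : ℤ) : ZMod n) := by
    obtain _ | n := n
    · exact r.elim0
    · exact (Fin.cast_val_eq_self r).symm
  rw [hr, zmodQuadraticForm_intCast, circleChar_coe]
  have := NeZero.ne (n : ℂ)
  push_cast
  field_simp

end Cyclic

section DiscriminantForm

variable {m : ℕ}

/-- The norm form `x ↦ ⟨x, x⟩ / 2` on `ℝᵐ`, reduced modulo `ℤ`. A lattice is even exactly when
the norm form vanishes on it. -/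
def normForm : QuadraticMap ℤ (Fin m → ℝ) UnitAddCircle :=
  (QuotientAddGroup.mk' (AddSubgroup.zmultiples (1 : ℝ))).toIntLinearMap.compQuadraticMap'
    ((2⁻¹ : ℝ) • LinearMap.BilinMap.toQuadraticMap (dotProductBilin ℝ ℝ))

lemma normForm_apply (x : Fin m → ℝ) :
    normForm x = ((x ⬝ᵥ x / 2 : ℝ) : UnitAddCircle) := by
  rw [div_eq_inv_mul]
  rfl

lemma polar_normForm (x y : Fin m → ℝ) :
    QuadraticMap.polar normForm x y = ((x ⬝ᵥ y : ℝ) : UnitAddCircle) := by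
  simp only [QuadraticMap.polar, normForm_apply, ← AddCircle.coe_sub, add_dotProduct,
    dotProduct_add, dotProduct_comm y x]
  congr 1
  ring

lemma normForm_eq_zero_iff {x : Fin m → ℝ} :
    normForm x = 0 ↔ ∃ k : ℤ, x ⬝ᵥ x = 2 * k := by
  rw [normForm_apply, AddCircle.coe_eq_zero_iff]
  refine exists_congr fun k ↦ ?_
  rw [zsmul_one, eq_div_iff two_ne_zero, eq_comm, mul_comm]

variable {L : Submodule ℤ (Fin m → ℝ)}

lemma mem_dualLat_iff_polar {x : Fin m → ℝ} :
    x ∈ dualLat L ↔ ∀ y ∈ L, QuadraticMap.polar normForm x y = 0 := by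
  refine forall₂_congr fun y _ ↦ ?_
  rw [polar_normForm, AddCircle.coe_eq_zero_iff]
  simp only [zsmul_one, eq_comm (b := x ⬝ᵥ y)]
  rfl

lemma le_dualLat_of_even (hL : ∀ x ∈ L, normForm x = 0) : L ≤ dualLat L := fun x hx ↦
  mem_dualLat_iff_polar.2 fun y hy ↦ by
    rw [QuadraticMap.polar, hL _ (add_mem hx hy), hL x hx, hL y hy, sub_zero, sub_zero]

variable (L) in
/-- The discriminant group `L^*/L` of a lattice `L`, with `L` pulled back to a subgroup of `L^*`. -/
abbrev DiscriminantGroup : Type := dualLat L ⧸ L.comap (dualLat L).subtype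

/-- The discriminant form `x + L ↦ ⟨x, x⟩ / 2 mod ℤ` of an even lattice `L`. -/
def discriminantForm (hL : ∀ x ∈ L, normForm x = 0) :
    QuadraticMap ℤ (DiscriminantGroup L) UnitAddCircle :=
  (normForm.comp (dualLat L).subtype).lift _ fun x hx ↦
    ⟨hL x hx, LinearMap.ext fun y ↦ (QuadraticMap.polar_comm _ _ _).trans
      (mem_dualLat_iff_polar.1 y.2 x hx)⟩

lemma discriminantForm_mk (hL : ∀ x ∈ L, normForm x = 0) (x : dualLat L) :
    discriminantForm hL (Submodule.Quotient.mk x) = normForm (x : Fin m → ℝ) := rfl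

lemma polar_discriminantForm_mk (hL : ∀ x ∈ L, normForm x = 0) (x y : dualLat L) :
    QuadraticMap.polar (discriminantForm hL) (Submodule.Quotient.mk x) (Submodule.Quotient.mk y) =
      QuadraticMap.polar normForm (x : Fin m → ℝ) y := rfl

lemma dualLat_eq_dualSubmodule :
    dualLat L = LinearMap.BilinForm.dualSubmodule (dotProductBilin ℝ ℝ) L := by
  ext x
  rw [LinearMap.BilinForm.mem_dualSubmodule]
  refine forall₂_congr fun y _ ↦ ?_
  simp only [Submodule.mem_one, eq_comm]
  rfl

lemma exists_basis_span_int_eq [Module.Finite ℤ L] (hrank : Module.finrank ℤ L = m)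
    (hspan : Submodule.span ℝ (L : Set (Fin m → ℝ)) = ⊤) :
    ∃ b : Module.Basis (Fin m) ℝ (Fin m → ℝ), Submodule.span ℤ (Set.range b) = L := by
  let c : Fin m → (Fin m → ℝ) := L.subtype ∘ Module.finBasisOfFinrankEq ℤ L hrank
  have hc : Submodule.span ℤ (Set.range c) = L := by
    rw [Set.range_comp, ← Submodule.map_span, Module.Basis.span_eq, Submodule.map_top,
      Submodule.range_subtype]
  have hc_top : Submodule.span ℝ (Set.range c) = ⊤ := by
    rw [← Submodule.span_span_of_tower ℤ, hc, hspan]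
  have hli := linearIndependent_of_top_le_span_of_card_eq_finrank hc_top.ge (by simp)
  exact ⟨.mk hli hc_top.ge, by rwa [Module.Basis.coe_mk]⟩

theorem dualLat_dualLat [Module.Finite ℤ L] (hrank : Module.finrank ℤ L = m)
    (hspan : Submodule.span ℝ (L : Set (Fin m → ℝ)) = ⊤) : dualLat (dualLat L) = L := by
  obtain ⟨b, rfl⟩ := exists_basis_span_int_eq hrank hspan
  let B : LinearMap.BilinForm ℝ (Fin m → ℝ) := dotProductBilin ℝ ℝ
  have hsymm : B.IsSymm := ⟨fun x y ↦ dotProduct_comm x y⟩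
  have hnondeg : B.Nondegenerate := hsymm.isRefl.nondegenerate_iff_separatingLeft.2 fun x hx ↦
    dotProduct_self_eq_zero.1 (hx x)
  simpa only [dualLat_eq_dualSubmodule] using
    B.dualSubmodule_dualSubmodule_of_basis hnondeg hsymm b

lemma separatingLeft_polarBilin_discriminantForm [Module.Finite ℤ L]
    (hrank : Module.finrank ℤ L = m) (hspan : Submodule.span ℝ (L : Set (Fin m → ℝ)) = ⊤)
    (hL : ∀ x ∈ L, normForm x = 0) : (discriminantForm hL).polarBilin.SeparatingLeft := by
  intro x hx
  obtain ⟨x, rfl⟩ := Submodule.Quotient.mk_surjective _ x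
  rw [Submodule.Quotient.mk_eq_zero]
  exact (dualLat_dualLat hrank hspan).le <| mem_dualLat_iff_polar.2 fun y hy ↦
    hx (Submodule.Quotient.mk ⟨y, hy⟩)

lemma exists_quadraticGaussSum_eq_mul_discriminantForm {A P : Type*} [AddCommGroup A]
    [AddCommGroup P] [Finite A] [Finite (DiscriminantGroup L)] (hL : ∀ x ∈ L, normForm x = 0)
    {Q : QuadraticMap ℤ A UnitAddCircle} {f : P →ₗ[ℤ] A} (hf : Function.Surjective f)
    {φ : P →ₗ[ℤ] (Fin m → ℝ)} (hφ : dualLat L ≤ LinearMap.range φ)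
    (h : Q.comp f = normForm.comp φ) :
    ∃ r : ℝ, 0 < r ∧ quadraticGaussSum Q = r * quadraticGaussSum (discriminantForm hL) := by
  have hmem (x : P) :
      x ∈ (L.comap φ).orthogonalBilin (Q.comp f).polarBilin ↔ φ x ∈ dualLat L := by
    rw [h, Submodule.mem_orthogonalBilin_iff, mem_dualLat_iff_polar]
    have hpolar (z : P) : (normForm.comp φ).polarBilin z x =
        QuadraticMap.polar normForm (φ x) (φ z) :=
      (QuadraticMap.polar_comm _ _ _).trans (by simp [QuadraticMap.polar])
    simp only [hpolar]
    refine ⟨fun hx y hy ↦ ?_, fun hx z hz ↦ hx _ hz⟩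
    obtain ⟨z, rfl⟩ := hφ (le_dualLat_of_even hL hy)
    exact hx z hy
  let g := (L.comap (dualLat L).subtype).mkQ ∘ₗ φ.restrict fun x hx ↦ (hmem x).1 hx
  have hg : Function.Surjective g := by
    intro y
    obtain ⟨y, rfl⟩ := Submodule.Quotient.mk_surjective _ y
    obtain ⟨x, hx⟩ := hφ y.2
    exact ⟨⟨x, (hmem x).2 (hx ▸ y.2)⟩, congrArg Submodule.Quotient.mk (Subtype.ext hx)⟩
  have hQ (x : P) : Q (f x) = normForm (φ x) := DFunLike.congr_fun h x
  exact exists_quadraticGaussSum_eq_mul_of_isotropic hf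
    (fun x hx ↦ (hQ x).trans (hL _ hx)) hg fun x ↦ hQ x

end DiscriminantForm

section Milgram

variable {m : ℕ} {L : Submodule ℤ (Fin m → ℝ)}

lemma sum_dotProduct_of_pairwise {ι : Type*} [Fintype ι] {v : ι → Fin m → ℝ}
    (hv : Pairwise fun i j ↦ v i ⬝ᵥ v j = 0) (c : ι → ℝ) (j : ι) :
    (∑ i, c i • v i) ⬝ᵥ v j = c j * (v j ⬝ᵥ v j) := by
  rw [sum_dotProduct, sum_eq_single_of_mem j (mem_univ j), smul_dotProduct, smul_eq_mul]
  intro i _ hij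
  rw [smul_dotProduct, hv hij, smul_zero]

lemma normForm_sum_of_pairwise {ι : Type*} [Fintype ι] {v : ι → Fin m → ℝ}
    (hv : Pairwise fun i j ↦ v i ⬝ᵥ v j = 0) (c : ι → ℝ) :
    normForm (∑ i, c i • v i) = ∑ i, ((c i ^ 2 * (v i ⬝ᵥ v i) / 2 : ℝ) : UnitAddCircle) := by
  have hself : (∑ i, c i • v i) ⬝ᵥ (∑ i, c i • v i) = ∑ i, c i ^ 2 * (v i ⬝ᵥ v i) := by
    rw [dotProduct_sum]
    refine sum_congr rfl fun i _ ↦ ?_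
    rw [dotProduct_smul, sum_dotProduct_of_pairwise hv, smul_eq_mul]
    ring
  rw [normForm_apply, hself, sum_div]
  exact map_sum (QuotientAddGroup.mk' _) _ univ

lemma sum_dotProduct_div_smul_eq {v : Fin m → Fin m → ℝ}
    (hv : Pairwise fun i j ↦ v i ⬝ᵥ v j = 0) (hv0 : ∀ i, v i ≠ 0) (x : Fin m → ℝ) :
    ∑ i, (x ⬝ᵥ v i / (v i ⬝ᵥ v i)) • v i = x := by
  have hli : LinearIndependent ℝ v := LinearMap.linearIndependent_of_isOrthoᵢ
    (B := dotProductBilin ℝ ℝ) (fun i j hij ↦ hv hij) fun i ↦ dotProduct_self_eq_zero.not.2 (hv0 i)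
  obtain ⟨c, rfl⟩ := (Submodule.mem_span_range_iff_exists_fun ℝ).1 <|
    (hli.span_eq_top_of_card_eq_finrank' (by simp)).symm ▸ Submodule.mem_top (x := x)
  refine sum_congr rfl fun i _ ↦ ?_
  rw [sum_dotProduct_of_pairwise hv,
    mul_div_cancel_right₀ _ (dotProduct_self_eq_zero.not.2 (hv0 i))]

lemma exists_mem_orthogonal_of_notMem_span (hL : L ≤ dualLat L) {ι : Type*} [Finite ι]
    {v : ι → Fin m → ℝ} (hvL : ∀ i, v i ∈ L) (hv : Pairwise fun i j ↦ v i ⬝ᵥ v j = 0)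
    (hv0 : ∀ i, v i ≠ 0) {x : Fin m → ℝ} (hxL : x ∈ L)
    (hx : x ∉ Submodule.span ℝ (Set.range v)) :
    ∃ u ∈ L, u ≠ 0 ∧ ∀ i, u ⬝ᵥ v i = 0 := by
  cases nonempty_fintype ι
  choose n hn using fun i ↦ hL (hvL i) (v i) (hvL i)
  choose z hz using fun i ↦ hL hxL (v i) (hvL i)
  choose e he using fun i ↦ dvd_prod_of_mem n (mem_univ i)
  set d := ∏ i, n i
  have hd : (d : ℝ) ≠ 0 := by
    refine Int.cast_ne_zero.2 (prod_ne_zero_iff.2 fun i _ hi ↦ hv0 i ?_)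
    exact dotProduct_self_eq_zero.1 ((hn i).trans (by simp [hi]))
  have hsmul (k : ℤ) (y : Fin m → ℝ) (hy : y ∈ L) : (k : ℝ) • y ∈ L :=
    Int.cast_smul_eq_zsmul ℝ k y ▸ L.smul_mem k hy
  have hspan : ∑ i, ((z i * e i : ℤ) : ℝ) • v i ∈ Submodule.span ℝ (Set.range v) :=
    sum_mem fun i _ ↦ Submodule.smul_mem _ _ (Submodule.subset_span ⟨i, rfl⟩)
  -- The Gram–Schmidt vector of `x`, with its denominators cleared.
  refine ⟨(d : ℝ) • x - ∑ i, ((z i * e i : ℤ) : ℝ) • v i,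
    sub_mem (hsmul _ _ hxL) (sum_mem fun i _ ↦ hsmul _ _ (hvL i)), fun h ↦ hx ?_, fun i ↦ ?_⟩
  · exact (Submodule.smul_mem_iff _ hd).1 (sub_eq_zero.1 h ▸ hspan)
  · have hn : v i ⬝ᵥ v i = n i := hn i
    have hz : x ⬝ᵥ v i = z i := hz i
    rw [sub_dotProduct, sum_dotProduct_of_pairwise hv, smul_dotProduct, hn, hz, he i]
    push_cast
    rw [smul_eq_mul]
    ring

lemma exists_orthogonal_family_mem (hL : L ≤ dualLat L)
    (hspan : Submodule.span ℝ (L : Set (Fin m → ℝ)) = ⊤) {k : ℕ} (hk : k ≤ m) :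
    ∃ v : Fin k → Fin m → ℝ, (∀ i, v i ∈ L) ∧ (∀ i, v i ≠ 0) ∧
      Pairwise fun i j ↦ v i ⬝ᵥ v j = 0 := by
  induction k with
  | zero => exact ⟨0, finZeroElim, finZeroElim, fun i ↦ i.elim0⟩
  | succ k ih =>
    obtain ⟨v, hvL, hv0, hv⟩ := ih (by omega)
    have hne : Submodule.span ℝ (Set.range v) ≠ ⊤ := fun h ↦ by
      have := finrank_range_le_card (R := ℝ) v
      rw [Set.finrank, h, finrank_top, Module.finrank_fin_fun, Fintype.card_fin] at this
      omega
    obtain ⟨x, hxL, hx⟩ : ∃ x ∈ L, x ∉ Submodule.span ℝ (Set.range v) := by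
      by_contra! h
      exact hne (top_le_iff.1 (hspan ▸ Submodule.span_le.2 h))
    obtain ⟨u, huL, hu0, hu⟩ := exists_mem_orthogonal_of_notMem_span hL hvL hv hv0 hxL hx
    refine ⟨Fin.cons u v, Fin.cases huL hvL, Fin.cases hu0 hv0, fun i j hij ↦ ?_⟩
    induction i using Fin.cases <;> induction j using Fin.cases
    · exact absurd rfl hij
    · exact hu _
    · exact (dotProduct_comm _ _).trans (hu _)
    · exact hv fun h ↦ hij (congrArg _ h)

lemma exists_even_natCast_eq_dotProduct_self {x : Fin m → ℝ} (hx : normForm x = 0) :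
    ∃ n : ℕ, Even n ∧ x ⬝ᵥ x = n := by
  obtain ⟨k, hk⟩ := normForm_eq_zero_iff.1 hx
  have hk0 : 0 ≤ k := by
    have : 0 ≤ x ⬝ᵥ x := sum_nonneg fun i _ ↦ mul_self_nonneg (x i)
    exact_mod_cast (by linarith : (0 : ℝ) ≤ k)
  lift k to ℕ using hk0
  exact ⟨2 * k, even_two_mul k, by rw [hk]; push_cast; rfl⟩

lemma exists_quadraticGaussSum_pi_zmod_eq_mul [Finite (DiscriminantGroup L)]
    (hL : ∀ x ∈ L, normForm x = 0) {v : Fin m → Fin m → ℝ} (hvL : ∀ i, v i ∈ L)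
    (hv : Pairwise fun i j ↦ v i ⬝ᵥ v j = 0) {n : Fin m → ℕ} [∀ i, NeZero (n i)]
    (hn : ∀ i, Even (n i)) (hvn : ∀ i, v i ⬝ᵥ v i = n i) :
    ∃ r : ℝ, 0 < r ∧ quadraticGaussSum (QuadraticMap.pi fun i ↦ zmodQuadraticForm (hn i)) =
      r * quadraticGaussSum (discriminantForm hL) := by
  have hn0 (i : Fin m) : (n i : ℝ) ≠ 0 := NeZero.ne _
  have hv0 (i : Fin m) : v i ≠ 0 := fun h ↦ hn0 i (by rw [← hvn, h, zero_dotProduct])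
  let f : (Fin m → ℤ) →ₗ[ℤ] ∀ i, ZMod (n i) :=
    .piMap fun i ↦ (Int.castAddHom (ZMod (n i))).toIntLinearMap
  let φ := Fintype.linearCombination ℤ fun i ↦ (n i : ℝ)⁻¹ • v i
  have hφ (z : Fin m → ℤ) : φ z = ∑ i, (z i / n i : ℝ) • v i := by
    refine (Fintype.linearCombination_apply ℤ _ z).trans (sum_congr rfl fun i _ ↦ ?_)
    rw [← Int.cast_smul_eq_zsmul ℝ, smul_smul, div_eq_mul_inv]
  refine exists_quadraticGaussSum_eq_mul_discriminantForm hL (f := f)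
    (Function.Surjective.piMap fun i ↦ ZMod.intCast_surjective) (φ := φ) (fun x hx ↦ ?_) ?_
  · choose z hz using fun i ↦ hx (v i) (hvL i)
    refine ⟨z, ?_⟩
    rw [hφ, ← sum_dotProduct_div_smul_eq hv hv0 x]
    exact sum_congr rfl fun i _ ↦ by rw [hvn, ← hz]; rfl
  · ext z
    rw [QuadraticMap.comp_apply, QuadraticMap.comp_apply, hφ, normForm_sum_of_pairwise hv,
      QuadraticMap.pi_apply]
    refine sum_congr rfl fun i _ ↦ (zmodQuadraticForm_intCast (hn i) (z i)).trans ?_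
    have := hn0 i
    rw [hvn]
    congr 1
    field_simp

theorem quadraticGaussSum_discriminantForm [Finite (DiscriminantGroup L)] [Module.Finite ℤ L]
    (hrank : Module.finrank ℤ L = m) (hspan : Submodule.span ℝ (L : Set (Fin m → ℝ)) = ⊤)
    (hL : ∀ x ∈ L, normForm x = 0) :
    quadraticGaussSum (discriminantForm hL) =
      √(Nat.card (DiscriminantGroup L)) * cexp (Real.pi * I / 4) ^ m := by
  obtain ⟨v, hvL, hv0, hv⟩ := exists_orthogonal_family_mem (le_dualLat_of_even hL) hspan le_rfl
  choose n hn hvn using fun i ↦ exists_even_natCast_eq_dotProduct_self (hL _ (hvL i))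
  have (i : Fin m) : NeZero (n i) := ⟨fun h ↦ hv0 i <| dotProduct_self_eq_zero.1 <| by
    rw [hvn, h, Nat.cast_zero]⟩
  obtain ⟨r, hr, hG⟩ := exists_quadraticGaussSum_pi_zmod_eq_mul hL hvL hv hn hvn
  set ζ := cexp (Real.pi * I / 4)
  have hprod : ((∏ i, √(n i) : ℝ) : ℂ) * ζ ^ m = r * quadraticGaussSum (discriminantForm hL) := by
    rw [← hG, quadraticGaussSum_pi]
    simp_rw [quadraticGaussSum_zmodQuadraticForm, prod_mul_distrib]
    simp [ζ]
  have hζ : ‖ζ‖ = 1 := by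
    rw [show ζ = cexp ((Real.pi / 4 : ℝ) * I) by simp only [ζ]; push_cast; ring_nf]
    exact norm_exp_ofReal_mul_I _
  have hnorm : ∏ i, √(n i) = r * √(Nat.card (DiscriminantGroup L)) := by
    have := congrArg norm hprod
    rwa [norm_mul, norm_mul, norm_pow, hζ, one_pow, mul_one, norm_real, norm_real,
      Real.norm_of_nonneg (prod_nonneg fun i _ ↦ Real.sqrt_nonneg _), Real.norm_of_nonneg hr.le,
      norm_quadraticGaussSum (separatingLeft_polarBilin_discriminantForm hrank hspan hL)] at this
  refine mul_left_cancel₀ (ofReal_ne_zero.2 hr.ne') ?_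
  rw [← hprod, hnorm]
  push_cast
  ring

end Milgram

section Lattice

variable {m : ℕ} {L : Submodule ℤ (Fin m → ℝ)}

lemma weilS_discriminantForm_mk (hL : ∀ x ∈ L, normForm x = 0) (x y : dualLat L) :
    weilS (discriminantForm hL) (Submodule.Quotient.mk x) (Submodule.Quotient.mk y) =
      cexp (-2 * Real.pi * I * (x.1 ⬝ᵥ y.1 : ℝ)) := by
  rw [weilS, Matrix.of_apply, polar_discriminantForm_mk, polar_normForm, ← AddCircle.coe_neg,
    circleChar_coe]
  push_cast
  ring_nf

lemma cexp_smul_weilT_discriminantForm_mk [DecidableEq (DiscriminantGroup L)]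
    (hL : ∀ x ∈ L, normForm x = 0) (x y : dualLat L) :
    (cexp (-(Real.pi * I * m / 12)) • weilT (discriminantForm hL))
        (Submodule.Quotient.mk x) (Submodule.Quotient.mk y) =
      cexp (Real.pi * I * ((x.1 ⬝ᵥ x.1 : ℝ) - m / 12)) *
        if (Submodule.Quotient.mk x : DiscriminantGroup L) = Submodule.Quotient.mk y
        then 1 else 0 := by
  rw [Matrix.smul_apply, weilT, Matrix.diagonal_apply, discriminantForm_mk, normForm_apply,
    circleChar_coe, mul_ite, mul_one, mul_zero, smul_ite, smul_zero, smul_eq_mul,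
    ← Complex.exp_add]
  push_cast
  ring_nf

lemma inv_sqrt_mul_cexp_pow_three_mul_quadraticGaussSum [Finite (DiscriminantGroup L)]
    [Module.Finite ℤ L] (hrank : Module.finrank ℤ L = m)
    (hspan : Submodule.span ℝ (L : Set (Fin m → ℝ)) = ⊤) (hL : ∀ x ∈ L, normForm x = 0) :
    (1 / √(Nat.card (DiscriminantGroup L)) : ℝ) * cexp (-(Real.pi * I * m / 12)) ^ 3 *
      quadraticGaussSum (discriminantForm hL) = 1 := by
  have hN : (√(Nat.card (DiscriminantGroup L)) : ℂ) ≠ 0 := by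
    simp [Real.sqrt_eq_zero, Nat.card_pos.ne']
  have hphase : cexp (-(Real.pi * I * m / 12)) ^ 3 * cexp (Real.pi * I / 4) ^ m = 1 := by
    rw [← Complex.exp_nat_mul, ← Complex.exp_nat_mul, ← Complex.exp_add, Complex.exp_eq_one_iff]
    exact ⟨0, by push_cast; ring⟩
  rw [quadraticGaussSum_discriminantForm hrank hspan hL, mul_mul_mul_comm, hphase, mul_one]
  push_cast
  exact one_div_mul_cancel hN

end Lattice

/-- For a full-rank even lattice `L ⊆ ℝ^m` with `N = |L^*/L|`, coset
representatives `α_ℓ`, and the matrices `T_{ℓℓ'} = e^{πi(⟨α_ℓ,α_ℓ⟩ - m/12)} δ_{ℓℓ'}` and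
`S_{ℓℓ'} = N^{-1/2} e^{-2πi⟨α_ℓ,α_{ℓ'}⟩}`, one has `(S·T)³ = S²`. -/
theorem lattice_ST_cubed_eq_S_squared {m N : ℕ}
    (L : Submodule ℤ (Fin m → ℝ))
    (hfree : Module.Free ℤ L) (hfg : Module.Finite ℤ L)
    (hrank : Module.finrank ℤ L = m)
    (hspan : Submodule.span ℝ (L : Set (Fin m → ℝ)) = ⊤)
    (heven : ∀ x ∈ L, ∃ k : ℤ, ∑ i, x i * x i = 2 * (k : ℝ))
    (hcard : Nat.card ((↥(dualLat L)) ⧸ L.comap (dualLat L).subtype) = N)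
    (α : Fin N → (Fin m → ℝ)) (hα : ∀ ℓ, α ℓ ∈ dualLat L)
    (hrep : Function.Bijective fun ℓ : Fin N =>
      (Submodule.Quotient.mk (⟨α ℓ, hα ℓ⟩ : ↥(dualLat L)) :
        (↥(dualLat L)) ⧸ L.comap (dualLat L).subtype))
    (S T : Matrix (Fin N) (Fin N) ℂ)
    (hT : ∀ ℓ ℓ', T ℓ ℓ' = Complex.exp ((Real.pi : ℂ) * Complex.I *
        (((∑ i, α ℓ i * α ℓ i : ℝ) : ℂ) - (m : ℂ) / 12)) * (if ℓ = ℓ' then 1 else 0))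
    (hS : ∀ ℓ ℓ', S ℓ ℓ' = (1 / Real.sqrt N : ℝ) *
      Complex.exp (-2 * (Real.pi : ℂ) * Complex.I * ((∑ i, α ℓ i * α ℓ' i : ℝ) : ℂ))) :
    (S * T) ^ 3 = S ^ 2 := by
  classical
  subst hcard
  let e : Fin _ ≃ DiscriminantGroup L := Equiv.ofBijective _ hrep
  have := Fintype.ofEquiv _ e
  have hL : ∀ x ∈ L, normForm x = 0 := fun x hx ↦ normForm_eq_zero_iff.2 (heven x hx)
  let reindex := Matrix.reindexAlgEquiv ℂ ℂ e.symm
  have hS' : S = reindex (((1 / √(Nat.card (DiscriminantGroup L)) : ℝ) : ℂ) •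
      weilS (discriminantForm hL)) := by
    ext i j
    exact (hS i j).trans (congrArg _ (weilS_discriminantForm_mk hL ⟨_, hα i⟩ ⟨_, hα j⟩).symm)
  have hT' : T = reindex (cexp (-(Real.pi * I * m / 12)) • weilT (discriminantForm hL)) := by
    ext i j
    rw [hT]
    simp_rw [← e.injective.eq_iff]
    exact (cexp_smul_weilT_discriminantForm_mk hL ⟨_, hα i⟩ ⟨_, hα j⟩).symm
  rw [hS', hT', ← map_mul, ← map_pow, ← map_pow, smul_weilS_mul_smul_weilT_pow_three _
    (inv_sqrt_mul_cexp_pow_three_mul_quadraticGaussSum hrank hspan hL)]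

end
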